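/- arXiv:2401.02434 — 8 statements merged into one kernel-verified Lean document; each statement's English description precedes it below -/
import Mathlib

section
/- The map S : List Bool → ℚ encoding the S-tree is injective, and its range is exactly the set of rationals strictly between 0 and 1: for every q : ℚ, (∃ s : List Bool, S s = q) ↔ (0 < q ∧ q < 1). Hence every reduced rational number in the interval (0,1] occurs at exactly one vertex of the S-tree (the root 1/1 together with the vertices S s). -/
/-- Helper computing the S-tree value from the reversed 0-1 sequence. -/
def Sa : List Bool → ℚ
  | [] => 1/2
  | b :: t => if b then 1 / (1 + Sa t) else Sa t / (1 + Sa t)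

/-- The S-tree map: `S [] = 1/2`, `S (s ++ [false]) = S s / (1 + S s)` and
`S (s ++ [true]) = 1 / (1 + S s)`. -/
def S (s : List Bool) : ℚ := Sa s.reverse

/-!
The left child of a point of `(0, 1)` lies in `(0, 1/2)` and the right child in `(1/2, 1)`, while
the top vertex is `1/2` itself. So comparing a value with `1/2` recovers the last bit of its 0-1
sequence, and since both child maps are injective, `S` is injective.

For surjectivity, write a rational of `(0, 1)` as `m / (m + n)` with `m, n > 0`. It is the left
child of `m / n` and the right child of `n / m`; whichever of these is below `1` is again of the
form `m' / (m' + n')`, so the subtractive Euclidean algorithm on `(m, n)` climbs up to `1/2`.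
-/

open Set

/-- The children of a vertex `x` of the S-tree over an arbitrary field: `false` selects the left
child, `true` the right child. -/
def sChild {K : Type*} [Field K] : Bool → K → K
  | false, x => x / (1 + x)
  | true, x => 1 / (1 + x)

section Field

variable {K : Type*} [Field K]

theorem sChild_false_div (a : K) {b : K} (hb : b ≠ 0) : sChild false (a / b) = a / (a + b) := by
  rw [sChild, one_add_div hb, div_div_div_cancel_right₀ hb, add_comm]

theorem sChild_true_div (a : K) {b : K} (hb : b ≠ 0) : sChild true (a / b) = b / (a + b) := by
  rw [sChild, one_add_div hb, one_div_div, add_comm]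

-- At `x = -1` the junk value `-1 / 0 = 0` would collide with the left child of `0`.
theorem sChild_injOn (b : Bool) : InjOn (sChild b : K → K) {x | 1 + x ≠ 0} := by
  intro x hx y hy hxy
  cases b <;> simp only [sChild, div_eq_div_iff hx hy] at hxy
  · linear_combination hxy
  · linear_combination -hxy

end Field

section LinearOrderedField

variable {K : Type*} [Field K] [LinearOrder K] [IsStrictOrderedRing K] {x y : K}

theorem sChild_false_mem_Ioo (hx : x ∈ Ioo 0 1) : sChild false x ∈ Ioo 0 (1 / 2) := by
  obtain ⟨hx0, hx1⟩ := hx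
  refine ⟨by unfold sChild; positivity, ?_⟩
  rw [sChild, div_lt_div_iff₀ (by positivity) two_pos]
  linarith

theorem sChild_true_mem_Ioo (hx : x ∈ Ioo 0 1) : sChild true x ∈ Ioo (1 / 2) 1 := by
  obtain ⟨hx0, hx1⟩ := hx
  constructor
  · exact one_div_lt_one_div_of_lt (by positivity) (by linarith)
  · exact (div_lt_one (by positivity)).mpr (by linarith)

theorem sChild_mem_Ioo (b : Bool) (hx : x ∈ Ioo 0 1) : sChild b x ∈ Ioo 0 1 := by
  cases b
  · exact Ioo_subset_Ioo_right one_half_lt_one.le (sChild_false_mem_Ioo hx)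
  · exact Ioo_subset_Ioo_left one_half_pos.le (sChild_true_mem_Ioo hx)

theorem sChild_ne_one_half (b : Bool) (hx : x ∈ Ioo 0 1) : sChild b x ≠ 1 / 2 := by
  cases b
  · exact (sChild_false_mem_Ioo hx).2.ne
  · exact (sChild_true_mem_Ioo hx).1.ne'

theorem sChild_false_lt_sChild_true (hx : x ∈ Ioo 0 1) (hy : y ∈ Ioo 0 1) :
    sChild false x < sChild true y :=
  (sChild_false_mem_Ioo hx).2.trans (sChild_true_mem_Ioo hy).1

theorem sChild_inj {b c : Bool} (hx : x ∈ Ioo 0 1) (hy : y ∈ Ioo 0 1) :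
    sChild b x = sChild c y ↔ b = c ∧ x = y := by
  refine ⟨fun h => ?_, by rintro ⟨rfl, rfl⟩; rfl⟩
  obtain rfl : b = c := by
    cases b <;> cases c
    · rfl
    · exact absurd h (sChild_false_lt_sChild_true hx hy).ne
    · exact absurd h (sChild_false_lt_sChild_true hy hx).ne'
    · rfl
  exact ⟨rfl, sChild_injOn b (add_pos one_pos hx.1).ne' (add_pos one_pos hy.1).ne' h⟩

end LinearOrderedField

theorem S_nil : S [] = 1 / 2 := rfl

theorem S_append_singleton (s : List Bool) (b : Bool) : S (s ++ [b]) = sChild b (S s) := by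
  cases b <;> simp [S, Sa, sChild]

theorem S_mem_Ioo (s : List Bool) : S s ∈ Ioo 0 1 := by
  induction s using List.reverseRecOn with
  | nil => exact ⟨one_half_pos, one_half_lt_one⟩
  | append_singleton s b ih => exact S_append_singleton s b ▸ sChild_mem_Ioo b ih

theorem S_append_singleton_ne_S_nil (s : List Bool) (b : Bool) : S (s ++ [b]) ≠ S [] := by
  rw [S_append_singleton, S_nil]
  exact sChild_ne_one_half b (S_mem_Ioo s)

theorem S_injective : Function.Injective S := by
  intro s t h
  induction s using List.reverseRecOn generalizing t with
  | nil =>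
    cases t using List.reverseRecOn with
    | nil => rfl
    | append_singleton t c => exact absurd h.symm (S_append_singleton_ne_S_nil t c)
  | append_singleton s b ih =>
    cases t using List.reverseRecOn with
    | nil => exact absurd h (S_append_singleton_ne_S_nil s b)
    | append_singleton t c =>
      rw [S_append_singleton, S_append_singleton, sChild_inj (S_mem_Ioo s) (S_mem_Ioo t)] at h
      rw [h.1, ih h.2]

-- `m` and `n` need not be coprime, so the induction carries no coprimality condition.
theorem exists_S_eq_div_add {m n : ℕ} (hm : 0 < m) (hn : 0 < n) :
    ∃ s, S s = (m : ℚ) / (m + n) := by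
  have hm0 : (m : ℚ) ≠ 0 := Nat.cast_ne_zero.mpr hm.ne'
  have hn0 : (n : ℚ) ≠ 0 := Nat.cast_ne_zero.mpr hn.ne'
  obtain hlt | rfl | hlt := lt_trichotomy m n
  · obtain ⟨k, hk, rfl⟩ := exists_pos_add_of_lt' hlt
    obtain ⟨s, hs⟩ := exists_S_eq_div_add hm hk
    refine ⟨s ++ [false], ?_⟩
    rw [S_append_singleton, hs, ← Nat.cast_add, sChild_false_div _ hn0]
  · exact ⟨[], by rw [S_nil, ← two_mul, div_mul_cancel_right₀ hm0, one_div]⟩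
  · obtain ⟨k, hk, rfl⟩ := exists_pos_add_of_lt' hlt
    obtain ⟨s, hs⟩ := exists_S_eq_div_add hn hk
    refine ⟨s ++ [true], ?_⟩
    rw [S_append_singleton, hs, ← Nat.cast_add, sChild_true_div _ hm0, add_comm (n : ℚ)]
termination_by m + n

theorem exists_eq_div_add_of_mem_Ioo {q : ℚ} (hq : q ∈ Ioo 0 1) :
    ∃ m n : ℕ, 0 < m ∧ 0 < n ∧ q = (m : ℚ) / (m + n) := by
  obtain ⟨m, hm⟩ := Int.eq_ofNat_of_zero_le (Rat.num_pos.mpr hq.1).le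
  have hm0 : 0 < m := by exact_mod_cast hm ▸ Rat.num_pos.mpr hq.1
  have hlt : m < q.den := by exact_mod_cast hm ▸ Rat.num_lt_denom_iff.mpr hq.2
  obtain ⟨n, hn0, hmn⟩ := exists_pos_add_of_lt' hlt
  refine ⟨m, n, hm0, hn0, ?_⟩
  rw [← Nat.cast_add, hmn, ← Int.cast_natCast m, ← hm, Rat.num_div_den]

theorem range_S : range S = Ioo 0 1 := by
  refine (range_subset_iff.mpr S_mem_Ioo).antisymm fun q hq => ?_
  obtain ⟨m, n, hm, hn, rfl⟩ := exists_eq_div_add_of_mem_Ioo hq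
  exact exists_S_eq_div_add hm hn

/-- The S-tree map is injective and its range is exactly the rationals strictly between
0 and 1; hence every reduced rational in `(0,1]` occurs at exactly one vertex of the
S-tree (the root `1/1` together with the vertices `S s`). -/
theorem stree_injective_and_range :
    Function.Injective S ∧ ∀ q : ℚ, (∃ s : List Bool, S s = q) ↔ (0 < q ∧ q < 1) :=
  ⟨S_injective, fun q => Set.ext_iff.mp range_S q⟩
end

section
/- For every bit string w, every bit b, and every natural number i, V (w ++ [b, true] ++ replicate i false) = V (w ++ [b, true]) + i • V w (componentwise in ℕ × ℕ). In tree language: if k is the right child of a vertex s of the SC-tree and s is a child of t, then the left branch L_k = {k₀ = k, k₁, k₂, …} of k satisfies k_i = k_{i−1} ⊕ t for all i ≥ 1, where ⊕ is the mediant operation. -/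
/-- Helper computing the SC-tree state from the reversed 0-1 sequence. -/
def Ha : List Bool → (ℕ × ℕ) × (ℕ × ℕ)
  | [] => ((1, 0), (0, 1))
  | b :: t =>
      if b then ((Ha t).2, (Ha t).1 + (Ha t).2) else ((Ha t).1, (Ha t).1 + (Ha t).2)

/-- The SC-tree state map: `H [] = ((1,0),(0,1))` and, if `H s = (p, d)`, then
`H (s ++ [false]) = (p, p + d)` and `H (s ++ [true]) = (d, p + d)`. -/
def H (s : List Bool) : (ℕ × ℕ) × (ℕ × ℕ) := Ha s.reverse

/-- The SC-tree vertex at position `s`: the pair `p + d`, regarded as a fraction. -/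
def V (s : List Bool) : ℕ × ℕ := (H s).1 + (H s).2

/-!
Write `H s = (p, d)`. A left step fixes `p` and adds it to `d`, so the vertices of the left branch
of `s` form an arithmetic progression with common difference `p`. Either child of `w` has `V w` as
its second component, and a right step moves that component into first position. So the right child
of a child of `w` has `p = V w`.
-/

theorem H_append_false (s : List Bool) : H (s ++ [false]) = ((H s).1, V s) := by
  simp [H, V, Ha]

theorem H_append_true (s : List Bool) : H (s ++ [true]) = ((H s).2, V s) := by
  simp [H, V, Ha]

theorem H_append_singleton_snd (s : List Bool) (b : Bool) : (H (s ++ [b])).2 = V s := by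
  cases b
  · rw [H_append_false]
  · rw [H_append_true]

theorem H_append_pair_true_fst (w : List Bool) (b : Bool) : (H (w ++ [b, true])).1 = V w := by
  rw [List.append_cons, H_append_true, H_append_singleton_snd]

theorem H_append_replicate_false (s : List Bool) (i : ℕ) :
    H (s ++ List.replicate i false) = ((H s).1, (H s).2 + i • (H s).1) := by
  induction i with
  | zero => simp
  | succ n ih =>
    rw [List.replicate_succ', ← List.append_assoc, H_append_false, V, ih, succ_nsmul',
      add_left_comm]

theorem V_append_replicate_false (s : List Bool) (i : ℕ) :
    V (s ++ List.replicate i false) = V s + i • (H s).1 := by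
  rw [V, H_append_replicate_false, V, add_assoc]

/-- If `k` is the right child of a vertex `s` of the SC-tree and `s` is a child of `t`,
then the left branch `L_k = {k₀ = k, k₁, k₂, …}` of `k` satisfies `kᵢ = k_{i−1} ⊕ t`
for all `i ≥ 1`; equivalently `kᵢ = k + i • t` componentwise. -/
theorem sctree_left_branch (w : List Bool) (b : Bool) (i : ℕ) :
    V ((w ++ [b, true]) ++ List.replicate i false) = V (w ++ [b, true]) + i • V w := by
  rw [V_append_replicate_false, H_append_pair_true_fst]
end

section
/- For every bit string s, V (false :: s) = Prod.swap (V (true :: s)): flipping the first bit of a position's 0-1 sequence replaces the SC-tree vertex by its reciprocal. Equivalently (the paper's formulation): for integers n ≥ 2 and 1 ≤ w ≤ 2^{n−2}, if k is the w-th vertex in level n of the SC-tree, then the (2^{n−2} + w)-th vertex in level n is 1/k. -/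
/-!
The states at positions `[false]` and `[true]` are `((1, 0), (1, 1))` and `((0, 1), (1, 1))`,
which differ by the coordinate swap. A step to a child only selects and adds components of the
state, so it commutes with every additive map, in particular with the swap; hence the symmetry
persists along any common continuation of the two positions and passes to the sum of the two
components.
-/

namespace SCTree

variable {M N : Type*} [Add M] [Add N]

/-- One step down the SC-tree, on states `(p, d)` with entries in any additive structure: the left
child (`false`) is `(p, p + d)` and the right child (`true`) is `(d, p + d)`. The state comes first
so that `List.foldl child` descends along a 0-1 sequence. -/
def child (x : M × M) (b : Bool) : M × M := (if b then x.2 else x.1, x.1 + x.2)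

section AddHomClass

variable {F : Type*} [FunLike F M N] [AddHomClass F M N]

lemma child_map (f : F) (x : M × M) (b : Bool) :
    child (Prod.map f f x) b = Prod.map f f (child x b) := by
  cases b <;> simp [child]

lemma foldl_child_map (f : F) (x : M × M) (s : List Bool) :
    s.foldl child (Prod.map f f x) = Prod.map f f (s.foldl child x) :=
  List.foldl_hom (Prod.map f f) (child_map f)

end AddHomClass

lemma H_append_singleton (s : List Bool) (b : Bool) : H (s ++ [b]) = child (H s) b := by
  cases b <;> simp [H, Ha, child]

lemma H_append (s t : List Bool) : H (s ++ t) = t.foldl child (H s) := by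
  induction t using List.reverseRecOn with
  | nil => simp
  | append_singleton t b ih =>
    rw [← List.append_assoc, H_append_singleton, ih, List.foldl_concat]

lemma H_false_cons (s : List Bool) :
    H (false :: s) = Prod.map Prod.swap Prod.swap (H (true :: s)) :=
  calc H (false :: s)
    _ = s.foldl child (H [false]) := H_append [false] s
    _ = s.foldl child (Prod.map Prod.swap Prod.swap (H [true])) := rfl
    _ = Prod.map Prod.swap Prod.swap (s.foldl child (H [true])) :=
      foldl_child_map (AddEquiv.prodComm : ℕ × ℕ ≃+ ℕ × ℕ) (H [true]) s
    _ = Prod.map Prod.swap Prod.swap (H (true :: s)) := by rw [← H_append, List.singleton_append]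

end SCTree

/-- Flipping the first bit of a position's 0-1 sequence replaces the SC-tree vertex by
its reciprocal: for `n ≥ 2` and `1 ≤ w ≤ 2^{n−2}`, the `(2^{n−2}+w)`-th vertex in level
`n` is the reciprocal of the `w`-th vertex in level `n`. -/
theorem sctree_reciprocal (s : List Bool) :
    V (false :: s) = Prod.swap (V (true :: s)) := by
  calc V (false :: s)
    _ = (H (true :: s)).1.swap + (H (true :: s)).2.swap := by
      rw [V, SCTree.H_false_cons, Prod.map_fst, Prod.map_snd]
    _ = (V (true :: s)).swap := (Prod.swap_add _ _).symm
end

section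
/- The map s ↦ ((V s).1 : ℚ) / ((V s).2 : ℚ) from List Bool to ℚ is injective, and its range is exactly {q : ℚ | 0 < q}. Hence the SC-tree corresponds one-to-one to the set of positive rational numbers: every positive rational occurs at exactly one vertex of the SC-tree. -/
/-!
Appending a letter multiplies the 2 × 2 matrix with columns `p`, `d` on the right by a fixed matrix.
As the root state is the identity matrix, prepending the same letter multiplies on the left, so it
acts on the vertex itself: the fraction `q` of `s` becomes `q + 1` at `false :: s` and `(q + 1)⁻¹`
at `true :: s`.

All fractions are positive, hence those of nonempty words lie above or below the root fraction `1`
according to their first letter, and a fraction determines its word letter by letter. Conversely,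
the subtractive Euclidean algorithm reduces every positive rational to `1` by undoing the two maps.
-/

namespace SCTree

lemma injective_of_cons {α β : Type*} {f : List α → β} (cons_ne_nil : ∀ a s, f (a :: s) ≠ f [])
    (cons_inj : ∀ a b s t, f (a :: s) = f (b :: t) → a = b ∧ f s = f t) :
    Function.Injective f := by
  intro s
  induction s with
  | nil =>
    rintro (_ | ⟨b, t⟩) h
    · rfl
    · exact absurd h.symm (cons_ne_nil b t)
  | cons a s ih =>
    rintro (_ | ⟨b, t⟩) h
    · exact absurd h (cons_ne_nil a s)
    · obtain ⟨rfl, hst⟩ := cons_inj a b s t h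
      rw [ih hst]

/-- The subtractive Euclidean algorithm on `(m, n)`, as an induction principle. -/
lemma natCast_div_induction {K : Type*} [DivisionSemiring K] [CharZero K] {P : K → Prop}
    (one : P 1) (add_one : ∀ x, P x → P (x + 1)) (inv_add_one : ∀ x, P x → P (x + 1)⁻¹)
    {m n : ℕ} (hm : 0 < m) (hn : 0 < n) : P (m / n) := by
  have hmK : (m : K) ≠ 0 := Nat.cast_ne_zero.mpr hm.ne'
  have hnK : (n : K) ≠ 0 := Nat.cast_ne_zero.mpr hn.ne'
  rcases lt_trichotomy m n with hlt | rfl | hgt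
  · obtain ⟨k, hk, rfl⟩ := exists_pos_add_of_lt' hlt
    have hdiv : (m : K) / (m + k : ℕ) = ((k : K) / m + 1)⁻¹ := by
      rw [div_add_one hmK, inv_div, Nat.cast_add, add_comm]
    exact hdiv ▸ inv_add_one _ (natCast_div_induction one add_one inv_add_one hk hm)
  · rwa [div_self hmK]
  · obtain ⟨k, hk, rfl⟩ := exists_pos_add_of_lt' hgt
    have hdiv : ((n + k : ℕ) : K) / n = k / n + 1 := by
      rw [div_add_one hnK, Nat.cast_add, add_comm]
    exact hdiv ▸ add_one _ (natCast_div_induction one add_one inv_add_one hk hn)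
termination_by m + n

lemma rat_pos_induction {P : ℚ → Prop} (one : P 1) (add_one : ∀ x, P x → P (x + 1))
    (inv_add_one : ∀ x, P x → P (x + 1)⁻¹) {q : ℚ} (hq : 0 < q) : P q := by
  have hnum : 0 < q.num := Rat.num_pos.mpr hq
  have hq_eq : (q.num.toNat : ℚ) / q.den = q := by
    rw [← Int.cast_natCast, Int.toNat_of_nonneg hnum.le, Rat.num_div_den]
  rw [← hq_eq]
  exact natCast_div_induction one add_one inv_add_one (Int.pos_iff_toNat_pos.mp hnum) q.den_pos

/-- The matrix of a letter acting on column vectors: `!![1, 1; 0, 1]` for `false` and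
`!![0, 1; 1, 1]` for `true`. It describes how vertices change when the letter is prepended. -/
def letterHom : Bool → ℕ × ℕ →+ ℕ × ℕ
  | false => (AddMonoidHom.fst ℕ ℕ + AddMonoidHom.snd ℕ ℕ).prod (AddMonoidHom.snd ℕ ℕ)
  | true => (AddMonoidHom.snd ℕ ℕ).prod (AddMonoidHom.fst ℕ ℕ + AddMonoidHom.snd ℕ ℕ)

lemma Ha_append_singleton (t : List Bool) (b : Bool) :
    Ha (t ++ [b]) = Prod.map (letterHom b) (letterHom b) (Ha t) := by
  induction t with
  | nil => cases b <;> rfl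
  | cons c t ih => cases c <;> simp [Ha, ih]

lemma H_cons (b : Bool) (s : List Bool) :
    H (b :: s) = Prod.map (letterHom b) (letterHom b) (H s) := by
  rw [H, List.reverse_cons, Ha_append_singleton, H]

lemma V_nil : V [] = (1, 1) := rfl

lemma V_cons (b : Bool) (s : List Bool) : V (b :: s) = letterHom b (V s) := by
  rw [V, H_cons, V, map_add, Prod.map_fst, Prod.map_snd]

lemma V_cons_false (s : List Bool) : V (false :: s) = ((V s).1 + (V s).2, (V s).2) :=
  V_cons false s

lemma V_cons_true (s : List Bool) : V (true :: s) = ((V s).2, (V s).1 + (V s).2) :=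
  V_cons true s

lemma V_pos (s : List Bool) : 0 < (V s).1 ∧ 0 < (V s).2 := by
  induction s with
  | nil => simp [V_nil]
  | cons b s ih => cases b <;> simp only [V_cons_false, V_cons_true] <;> omega

/-- The vertex at position `s`, read as a rational number. -/
def fraction (s : List Bool) : ℚ := (V s).1 / (V s).2

lemma fraction_pos (s : List Bool) : 0 < fraction s :=
  div_pos (Nat.cast_pos.mpr (V_pos s).1) (Nat.cast_pos.mpr (V_pos s).2)

lemma fraction_nil : fraction [] = 1 := by simp [fraction, V_nil]

lemma fraction_add_one (s : List Bool) :
    fraction s + 1 = ((V s).1 + (V s).2) / (V s).2 :=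
  div_add_one (Nat.cast_ne_zero.mpr (V_pos s).2.ne')

lemma fraction_cons_false (s : List Bool) : fraction (false :: s) = fraction s + 1 := by
  rw [fraction_add_one, fraction, V_cons_false, Nat.cast_add]

lemma fraction_cons_true (s : List Bool) : fraction (true :: s) = (fraction s + 1)⁻¹ := by
  rw [fraction_add_one, inv_div, fraction, V_cons_true, Nat.cast_add]

lemma one_lt_fraction_cons_false (s : List Bool) : 1 < fraction (false :: s) := by
  rw [fraction_cons_false]
  exact lt_add_of_pos_left 1 (fraction_pos s)

lemma fraction_cons_true_lt_one (s : List Bool) : fraction (true :: s) < 1 := by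
  rw [fraction_cons_true]
  exact inv_lt_one_of_one_lt₀ (lt_add_of_pos_left 1 (fraction_pos s))

lemma fraction_cons_ne_one (b : Bool) (s : List Bool) : fraction (b :: s) ≠ 1 := by
  cases b
  · exact (one_lt_fraction_cons_false s).ne'
  · exact (fraction_cons_true_lt_one s).ne

lemma fraction_cons_true_lt_fraction_cons_false (s t : List Bool) :
    fraction (true :: s) < fraction (false :: t) :=
  (fraction_cons_true_lt_one s).trans (one_lt_fraction_cons_false t)

lemma fraction_cons_inj (a b : Bool) (s t : List Bool)
    (h : fraction (a :: s) = fraction (b :: t)) : a = b ∧ fraction s = fraction t := by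
  cases a <;> cases b
  · rw [fraction_cons_false, fraction_cons_false] at h
    exact ⟨rfl, add_right_cancel h⟩
  · exact absurd h (fraction_cons_true_lt_fraction_cons_false t s).ne'
  · exact absurd h (fraction_cons_true_lt_fraction_cons_false s t).ne
  · rw [fraction_cons_true, fraction_cons_true] at h
    exact ⟨rfl, add_right_cancel (inv_injective h)⟩

lemma fraction_injective : Function.Injective fraction :=
  injective_of_cons (fun b s => fraction_nil ▸ fraction_cons_ne_one b s) fraction_cons_inj

lemma exists_fraction_eq {q : ℚ} (hq : 0 < q) : ∃ s, fraction s = q := by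
  refine rat_pos_induction (P := fun q => ∃ s, fraction s = q) ⟨[], fraction_nil⟩ ?_ ?_ hq
  · rintro _ ⟨s, rfl⟩
    exact ⟨false :: s, fraction_cons_false s⟩
  · rintro _ ⟨s, rfl⟩
    exact ⟨true :: s, fraction_cons_true s⟩

end SCTree

/-- The SC-tree corresponds one-to-one to the set of positive rationals: the map
sending a position to the fraction of its vertex is injective with range `{q | 0 < q}`. -/
theorem sctree_bijection :
    Function.Injective (fun s : List Bool => ((V s).1 : ℚ) / ((V s).2 : ℚ)) ∧
      ∀ q : ℚ, (∃ s : List Bool, ((V s).1 : ℚ) / ((V s).2 : ℚ) = q) ↔ 0 < q := by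
  refine ⟨SCTree.fraction_injective, fun q => ⟨?_, SCTree.exists_fraction_eq⟩⟩
  rintro ⟨s, rfl⟩
  exact SCTree.fraction_pos s
end

section
/- Let k ≥ 1 and let a_1, …, a_k be positive integers with a_k ≥ 2. Then the SC-tree vertex at position [true] ++ replicate (a_1 − 1) false ++ [true] ++ replicate (a_2 − 1) false ++ ⋯ ++ [true] ++ replicate (a_{k−1} − 1) false ++ [true] ++ replicate (a_k − 2) false, read as a fraction, equals cf(a_1, …, a_k). That is, the rational t ∈ (0,1) with continued fraction [0; a_1, …, a_k] has this bit string as its 0-1 sequence on the SC-tree. -/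
/-- Continued fraction value `cf [a₁, …, a_k] = 1/(a₁ + 1/(a₂ + ⋯ + 1/a_k))`. -/
def cf : List ℕ → ℚ
  | [] => 0
  | a :: t => 1 / ((a : ℚ) + cf t)

/-- The tail of the SC-tree 0-1 sequence of a continued fraction `[a₁, …, a_k]`:
`true :: replicate (a₁ − 1) false ++ ⋯ ++ true :: replicate (a_{k−1} − 1) false ++
true :: replicate (a_k − 2) false`. -/
def scSeq : List ℕ → List Bool
  | [] => []
  | [a] => true :: List.replicate (a - 2) false
  | a :: t => (true :: List.replicate (a - 1) false) ++ scSeq t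

/-!
The state recursion is additive, so *prepending* a bit to a 0-1 sequence, which changes the initial
state, acts on vertices by a fixed additive map: `(x, y) ↦ (x + y, y)` for `false` and
`(x, y) ↦ (y, x + y)` for `true`. On fractions `t = x / y` these maps are `t ↦ t + 1` and
`t ↦ 1 / (t + 1)`, so the block `true :: replicate (a - 1) false` acts by `t ↦ 1 / (a + t)`, which
is the recursion defining `cf`. The last block is one bit shorter because the root vertex has
fraction `1` rather than `0`.
-/

/-- The additive map by which prepending the bit `b` to a position acts on SC-tree vertices. It is
an additive homomorphism so that it commutes with the sums in the recursion defining `Ha`. -/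
def prependHom : Bool → ℕ × ℕ →+ ℕ × ℕ
  | false => (AddMonoidHom.fst ℕ ℕ + AddMonoidHom.snd ℕ ℕ).prod (AddMonoidHom.snd ℕ ℕ)
  | true => (AddMonoidHom.snd ℕ ℕ).prod (AddMonoidHom.fst ℕ ℕ + AddMonoidHom.snd ℕ ℕ)

theorem Ha_append_singleton (t : List Bool) (b : Bool) :
    Ha (t ++ [b]) = Prod.map (prependHom b) (prependHom b) (Ha t) := by
  induction t with
  | nil => cases b <;> rfl
  | cons c t ih => cases c <;> simp [Ha, ih, map_add]

theorem V_nil : V [] = (1, 1) := rfl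

theorem V_cons (b : Bool) (s : List Bool) : V (b :: s) = prependHom b (V s) := by
  simp only [V, H, List.reverse_cons, Ha_append_singleton, Prod.map_fst, Prod.map_snd, map_add]

theorem V_false_cons (s : List Bool) : V (false :: s) = ((V s).1 + (V s).2, (V s).2) :=
  V_cons false s

theorem V_true_cons (s : List Bool) : V (true :: s) = ((V s).2, (V s).1 + (V s).2) :=
  V_cons true s

theorem V_snd_pos (s : List Bool) : 0 < (V s).2 := by
  induction s with
  | nil => simp [V_nil]
  | cons b s ih =>
    cases b
    · simpa only [V_false_cons] using ih
    · simpa only [V_true_cons] using Nat.add_pos_right _ ih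

/-- The SC-tree vertex at position `s`, read as a rational number. The denominator is never zero,
by `V_snd_pos`. -/
def vertexFraction (s : List Bool) : ℚ := (V s).1 / (V s).2

theorem vertexFraction_nil : vertexFraction [] = 1 := by
  simp [vertexFraction, V_nil]

theorem vertexFraction_false_cons (s : List Bool) :
    vertexFraction (false :: s) = vertexFraction s + 1 := by
  have hy : ((V s).2 : ℚ) ≠ 0 := mod_cast (V_snd_pos s).ne'
  simp only [vertexFraction, V_false_cons, Nat.cast_add, add_div, div_self hy]

theorem vertexFraction_true_cons (s : List Bool) :
    vertexFraction (true :: s) = 1 / (vertexFraction s + 1) := by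
  have hy : ((V s).2 : ℚ) ≠ 0 := mod_cast (V_snd_pos s).ne'
  simp only [vertexFraction, V_true_cons, Nat.cast_add, div_add_one hy, one_div_div]

theorem vertexFraction_replicate_false_append (n : ℕ) (s : List Bool) :
    vertexFraction (List.replicate n false ++ s) = n + vertexFraction s := by
  induction n with
  | zero => simp
  | succ n ih =>
    rw [List.replicate_succ, List.cons_append, vertexFraction_false_cons, ih]
    push_cast
    ring

theorem vertexFraction_true_cons_replicate_false_append {a : ℕ} (ha : 0 < a) (s : List Bool) :
    vertexFraction (true :: List.replicate (a - 1) false ++ s) = 1 / (a + vertexFraction s) := by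
  rw [List.cons_append, vertexFraction_true_cons, vertexFraction_replicate_false_append,
    Nat.cast_pred ha]
  ring

theorem vertexFraction_scSeq_singleton {a : ℕ} (ha : 2 ≤ a) :
    vertexFraction (scSeq [a]) = cf [a] := by
  have hblock := vertexFraction_true_cons_replicate_false_append (Nat.sub_pos_of_lt ha) []
  rw [List.append_nil, vertexFraction_nil, Nat.cast_pred (by lia), sub_add_cancel] at hblock
  simpa only [scSeq, cf, add_zero, Nat.sub_sub, Nat.reduceAdd] using hblock

theorem vertexFraction_scSeq_cons {a : ℕ} (ha : 0 < a) {t : List ℕ} (ht : t ≠ []) :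
    vertexFraction (scSeq (a :: t)) = 1 / (a + vertexFraction (scSeq t)) := by
  obtain ⟨b, u, rfl⟩ := List.exists_cons_of_ne_nil ht
  exact vertexFraction_true_cons_replicate_false_append ha (scSeq (b :: u))

/-- For positive integers `a₁, …, a_k` (`k ≥ 1`) with `a_k ≥ 2`, the SC-tree vertex at
position `[true] ++ replicate (a₁−1) false ++ [true] ++ replicate (a₂−1) false ++ ⋯ ++
[true] ++ replicate (a_k−2) false`, read as a fraction, equals `cf (a₁, …, a_k)`. -/
theorem sctree_cf_lt_one (l : List ℕ) (hne : l ≠ []) (hpos : ∀ a ∈ l, 0 < a)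
    (hlast : 2 ≤ l.getLast hne) :
    ((V (scSeq l)).1 : ℚ) / ((V (scSeq l)).2 : ℚ) = cf l := by
  change vertexFraction (scSeq l) = cf l
  induction l, hne using List.recNeNil with
  | singleton a => exact vertexFraction_scSeq_singleton hlast
  | cons a t ht ih =>
    have hpos_tail : ∀ b ∈ t, 0 < b := fun b hb => hpos b (List.mem_cons_of_mem a hb)
    have hlast_tail : 2 ≤ t.getLast ht := by rwa [List.getLast_cons ht] at hlast
    rw [vertexFraction_scSeq_cons (hpos a List.mem_cons_self) ht, ih hpos_tail hlast_tail, cf]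
end

section
/- Let k ≥ 2 and let a_1, …, a_k be positive integers with a_k ≥ 2. Then the SC-tree vertex at position [false] ++ replicate (a_1 − 1) false ++ [true] ++ replicate (a_2 − 1) false ++ ⋯ ++ [true] ++ replicate (a_{k−1} − 1) false ++ [true] ++ replicate (a_k − 2) false, read as a fraction, equals a_1 + cf(a_2, …, a_k), i.e. the value of the continued fraction [a_1; a_2, …, a_k] > 1. -/
/-!
The letter `false` sends a state `(p, d)` to `(p, p + d)` and `true` sends it to `(d, p + d)`, so
a block of `true` followed by `b - 1` letters `false` sends `(p, d)` to `(d, p + b d)`, which is the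
recurrence for convergents of a continued fraction. Since
`cf t • d + (p + b d) = (b + cf t) • (cf (b :: t) • p + d)`, reading `scSeq t` from any state
`(p, d)` ends at a vertex that is a positive multiple of `cf t • p + d`. The initial block of `a₁`
letters `false` leads to the state `((1, 0), (a₁, 1))`, for which this vector is `(a₁ + cf t, 1)`.
-/

section Run

variable {M : Type*} [Add M]

/-- One step down the SC-tree, on states with entries in any additive structure, so that states can
be transported from `ℕ × ℕ` to the vector space `ℚ × ℚ`. -/
def scStep (S : M × M) (b : Bool) : M × M :=
  if b then (S.2, S.1 + S.2) else (S.1, S.1 + S.2)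

/-- The state reached from `S` by reading a word from left to right. -/
def scRun (S : M × M) (s : List Bool) : M × M :=
  s.foldl scStep S

/-- The SC-tree vertex attached to a state. -/
def scVertex (S : M × M) : M :=
  S.1 + S.2

lemma scRun_append (S : M × M) (s u : List Bool) :
    scRun S (s ++ u) = scRun (scRun S s) u :=
  List.foldl_append

lemma scVertex_scRun_map {N : Type*} [Add N] (f : M →ₙ+ N) (S : M × M) (s : List Bool) :
    scVertex (scRun (Prod.map f f S) s) = f (scVertex (scRun S s)) := by
  have hrun : scRun (Prod.map f f S) s = Prod.map f f (scRun S s) :=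
    List.foldl_hom (Prod.map f f) fun S b => by cases b <;> simp [scStep]
  simp [hrun, scVertex]

end Run

lemma H_concat (s : List Bool) (b : Bool) : H (s ++ [b]) = scStep (H s) b := by
  simp [H, Ha, scStep]

lemma H_eq_scRun (s : List Bool) : H s = scRun ((1, 0), (0, 1)) s := by
  induction s using List.reverseRecOn with
  | nil => rfl
  | append_singleton s b ih => rw [H_concat, ih, scRun_append]; rfl

lemma natCast_V (R : Type*) [AddMonoidWithOne R] (s : List Bool) :
    (((V s).1 : R), ((V s).2 : R)) = scVertex (scRun ((1, 0), (0, 1)) s) := by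
  let cast : ℕ × ℕ →+ R × R := (Nat.castAddMonoidHom R).prodMap (Nat.castAddMonoidHom R)
  calc (((V s).1 : R), ((V s).2 : R))
    _ = cast (scVertex (scRun ((1, 0), (0, 1)) s)) := by rw [← H_eq_scRun]; rfl
    _ = scVertex (scRun (Prod.map cast cast ((1, 0), (0, 1))) s) :=
      (scVertex_scRun_map (cast : ℕ × ℕ →ₙ+ R × R) _ s).symm
    _ = scVertex (scRun ((1, 0), (0, 1)) s) := by simp [cast]

lemma scRun_replicate_false {M : Type*} [AddCommMonoid M] (n : ℕ) (p d : M) :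
    scRun (p, d) (List.replicate n false) = (p, n • p + d) := by
  induction n with
  | zero => simp [scRun]
  | succ n ih =>
    rw [List.replicate_succ', scRun_append, ih, succ_nsmul', add_assoc]
    rfl

lemma scRun_true_cons_replicate_false {M : Type*} [AddCommMonoid M] (n : ℕ) (p d : M) :
    scRun (p, d) (true :: List.replicate n false) = (d, p + (n + 1) • d) :=
  calc scRun (p, d) (true :: List.replicate n false)
    _ = scRun (d, p + d) (List.replicate n false) := rfl
    _ = (d, n • d + (p + d)) := scRun_replicate_false n d (p + d)
    _ = (d, p + (n + 1) • d) := by rw [succ_nsmul, add_left_comm]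

lemma cf_nonneg (t : List ℕ) : 0 ≤ cf t := by
  induction t with
  | nil => exact le_rfl
  | cons a t ih => rw [cf]; positivity

lemma natCast_add_cf_pos {a : ℕ} (ha : 0 < a) (t : List ℕ) : 0 < (a : ℚ) + cf t :=
  add_pos_of_pos_of_nonneg (Nat.cast_pos.mpr ha) (cf_nonneg t)

lemma scSeq_cons_of_ne_nil (a : ℕ) {t : List ℕ} (ht : t ≠ []) :
    scSeq (a :: t) = (true :: List.replicate (a - 1) false) ++ scSeq t := by
  rw [scSeq]
  exact ht

section Module

variable {M : Type*} [AddCommMonoid M] [Module ℚ M]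

lemma smul_cf_cons_smul_add {a : ℕ} (ha : 0 < a) (t : List ℕ) (p d : M) :
    ((a : ℚ) + cf t) • (cf (a :: t) • p + d) = cf t • d + (p + a • d) := by
  have hcf : ((a : ℚ) + cf t) * cf (a :: t) = 1 :=
    mul_one_div_cancel (natCast_add_cf_pos ha t).ne'
  rw [smul_add, smul_smul, hcf, one_smul, add_smul, Nat.cast_smul_eq_nsmul]
  abel

lemma exists_scVertex_scRun_scSeq_eq_smul (t : List ℕ) (hne : t ≠ []) (hpos : ∀ a ∈ t, 0 < a)
    (hlast : 2 ≤ t.getLast hne) (p d : M) :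
    ∃ c : ℚ, 0 < c ∧ scVertex (scRun (p, d) (scSeq t)) = c • (cf t • p + d) := by
  induction t generalizing p d with
  | nil => exact absurd rfl hne
  | cons a t ih =>
    have ha : 0 < a := hpos a List.mem_cons_self
    have hden : 0 < (a : ℚ) + cf t := natCast_add_cf_pos ha t
    rcases t with _ | ⟨b, t⟩
    -- The last block is one letter shorter; the sum `p + d` defining the vertex makes up for it.
    · refine ⟨a + cf [], hden, ?_⟩
      obtain ⟨m, rfl⟩ : ∃ m, a = m + 2 := Nat.exists_eq_add_of_le' hlast
      calc scVertex (scRun (p, d) (scSeq [m + 2]))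
        _ = d + (p + (m + 1) • d) :=
          congrArg scVertex (scRun_true_cons_replicate_false m p d)
        _ = cf [] • d + (p + (m + 2) • d) := by
          rw [cf, zero_smul, zero_add, succ_nsmul' d (m + 1), add_left_comm]
        _ = _ := (smul_cf_cons_smul_add ha [] p d).symm
    · have hrun : scRun (p, d) (scSeq (a :: b :: t)) =
          scRun (d, p + a • d) (scSeq (b :: t)) := by
        rw [scSeq_cons_of_ne_nil a (List.cons_ne_nil b t), scRun_append,
          scRun_true_cons_replicate_false, Nat.sub_add_cancel ha]
      obtain ⟨c, hc, hvertex⟩ := ih (List.cons_ne_nil b t)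
        (fun x hx => hpos x (List.mem_cons_of_mem a hx)) hlast d (p + a • d)
      refine ⟨c * (a + cf (b :: t)), mul_pos hc hden, ?_⟩
      rw [hrun, hvertex, mul_smul, smul_cf_cons_smul_add ha]

end Module

/-- For positive integers `a₁, …, a_k` (`k ≥ 2`) with `a_k ≥ 2`, the SC-tree vertex at
position `[false] ++ replicate (a₁−1) false ++ [true] ++ replicate (a₂−1) false ++ ⋯ ++
[true] ++ replicate (a_k−2) false`, read as a fraction, equals
`a₁ + cf (a₂, …, a_k)`, i.e. the value of the continued fraction `[a₁; a₂, …, a_k]`. -/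
theorem sctree_cf_gt_one (a₁ : ℕ) (t : List ℕ) (hne : t ≠ []) (ha₁ : 0 < a₁)
    (hpos : ∀ a ∈ t, 0 < a) (hlast : 2 ≤ t.getLast hne) :
    ((V (false :: (List.replicate (a₁ - 1) false ++ scSeq t))).1 : ℚ) /
        ((V (false :: (List.replicate (a₁ - 1) false ++ scSeq t))).2 : ℚ) =
      (a₁ : ℚ) + cf t := by
  have hword : false :: (List.replicate (a₁ - 1) false ++ scSeq t) =
      List.replicate a₁ false ++ scSeq t := by
    rw [← List.cons_append, ← List.replicate_succ, Nat.sub_add_cancel ha₁]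
  rw [hword]
  set s := List.replicate a₁ false ++ scSeq t with hs
  obtain ⟨c, hc, hvertex⟩ := exists_scVertex_scRun_scSeq_eq_smul t hne hpos hlast
    ((1, 0) : ℚ × ℚ) (a₁ • (1, 0) + (0, 1))
  have hV : (((V s).1 : ℚ), ((V s).2 : ℚ)) = (c * (a₁ + cf t), c) :=
    calc (((V s).1 : ℚ), ((V s).2 : ℚ))
      _ = scVertex (scRun ((1, 0), (0, 1)) s) := natCast_V ℚ s
      _ = c • (cf t • (1, 0) + (a₁ • (1, 0) + (0, 1))) := by
        rw [hs, scRun_append, scRun_replicate_false, hvertex]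
      _ = (c * (a₁ + cf t), c) := by simp [add_comm]
  obtain ⟨hnum, hden⟩ := Prod.mk.inj hV
  rw [hnum, hden, mul_div_cancel_left₀ _ hc.ne']
end

section
/- Let M ≥ 1 and 1 ≤ N_s ≤ 2^{M−1}, and write the binary expansion N_s − 1 = Σ_{i=1}^{k} 2^{r_i} with r_1 > r_2 > ⋯ > r_k ≥ 0 (k = 0 when N_s = 1). Define N_c = 1 + Σ_{j=1}^{k/2} (2^{r_{2j−1}+1} − 2^{r_{2j}+1}) if k is even, and N_c = 1 + 2^M − 2^{r_1+1} + Σ_{j=1}^{(k−1)/2} (2^{r_{2j}+1} − 2^{r_{2j+1}+1}) if k is odd. Let x be the bit string of length M − 1 whose binary value is N_s − 1, and let y be the bit string of length M whose binary value is N_c − 1. Then S x = C y: the N_s-th vertex in level M of the S-tree equals the N_c-th vertex in level M of the Calkin–Wilf tree. -/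
/-- Helper computing the Calkin–Wilf value from the reversed 0-1 sequence. -/
def Ca : List Bool → ℚ
  | [] => 1
  | b :: t => if b then 1 + Ca t else Ca t / (1 + Ca t)

/-- The Calkin–Wilf tree map: `C [] = 1`, `C (s ++ [false]) = C s / (1 + C s)` and
`C (s ++ [true]) = 1 + C s`. -/
def C (s : List Bool) : ℚ := Ca s.reverse

/-- Binary value of a 0-1 sequence, most significant bit first. -/
def binVal (s : List Bool) : ℕ := s.foldl (fun v b => 2 * v + (if b then 1 else 0)) 0

/-!
Write `L q = q / (1 + q)`, `R q = 1 + q` and `ι q = q⁻¹`. The steps of the S-tree are `L` and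
`L ∘ ι`, those of the Calkin–Wilf tree are `L` and `R`, the root of the S-tree is `1/2 = L 1`, and
`ι ∘ L = R ∘ ι`. Pushing every `ι` inwards until it reaches the fixed point `1` turns the word of
an S-tree vertex into a Calkin–Wilf word: counting positions from the least significant end, the
bit of the latter in position `p` is the parity of the number of ones of the former below `p`.

If the ones of the S-word are in positions `r₁ > ⋯ > r_k`, the ones of the Calkin–Wilf word fill the
blocks of positions from `r_k + 1` to `r_{k-1}`, from `r_{k-2} + 1` to `r_{k-3}`, and so on, the top
block running to the end of the word if `k` is odd. Summing each block as a difference of two powers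
of two gives the value of the Calkin–Wilf word, and a word is determined by its length and value.
-/

section AlternatingSum

lemma alternatingSum_map_mul_left {ι R : Type*} [NonUnitalNonAssocRing R] (c : R) (f : ι → R)
    (l : List ι) :
    (l.map fun i => c * f i).alternatingSum = c * (l.map f).alternatingSum := by
  induction l with
  | nil => simp
  | cons i l ih => simp only [List.map_cons, List.alternatingSum_cons, ih, mul_sub]

lemma reverse_map_range_succ {α : Type*} (f : ℕ → α) (k : ℕ) :
    ((List.range (k + 1)).map f).reverse = f k :: ((List.range k).map f).reverse := by
  rw [List.range_succ, List.map_append, List.map_singleton, List.reverse_concat]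

variable {G : Type*} [AddCommGroup G] (f : ℕ → G) (m : ℕ)

lemma alternatingSum_reverse_map_range_two_mul :
    ((List.range (2 * m)).map f).reverse.alternatingSum =
      ∑ j ∈ Finset.range m, (f (2 * j + 1) - f (2 * j)) := by
  induction m with
  | zero => rfl
  | succ m ih =>
    rw [Nat.mul_succ, reverse_map_range_succ, reverse_map_range_succ,
      List.alternatingSum_cons_cons, ih, Finset.sum_range_succ, add_comm]

lemma alternatingSum_reverse_map_range_two_mul_add_one :
    ((List.range (2 * m + 1)).map f).reverse.alternatingSum =
      f 0 + ∑ j ∈ Finset.range m, (f (2 * j + 2) - f (2 * j + 1)) := by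
  induction m with
  | zero => simp
  | succ m ih =>
    rw [Nat.mul_succ, reverse_map_range_succ, reverse_map_range_succ,
      List.alternatingSum_cons_cons, ih, Finset.sum_range_succ]
    abel

end AlternatingSum

lemma cast_sum_two_pow_tsub {ι : Type*} {s : Finset ι} {a b : ι → ℕ} (h : ∀ i ∈ s, b i ≤ a i) :
    ((∑ i ∈ s, (2 ^ a i - 2 ^ b i) : ℕ) : ℤ) = -∑ i ∈ s, ((2 : ℤ) ^ b i - 2 ^ a i) := by
  rw [Nat.cast_sum, ← Finset.sum_neg_distrib]
  refine Finset.sum_congr rfl fun i hi => ?_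
  rw [Nat.cast_sub (Nat.pow_le_pow_right two_pos (h i hi)), neg_sub]
  push_cast
  rfl

section BinaryValue

/-- The binary value of a 0-1 sequence, least significant bit first. This is the order in which
`Sa` and `Ca` read their argument. -/
def valLE (l : List Bool) : ℕ := Nat.ofDigits 2 (l.map Bool.toNat)

lemma valLE_cons (b : Bool) (l : List Bool) : valLE (b :: l) = b.toNat + 2 * valLE l := by
  simp [valLE, Nat.ofDigits_cons]

lemma binVal_eq_valLE_reverse (l : List Bool) : binVal l = valLE l.reverse := by
  induction l using List.reverseRecOn with
  | nil => rfl
  | append_singleton l b ih =>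
    have binVal_concat : binVal (l ++ [b]) = 2 * binVal l + b.toNat := by
      cases b <;> simp [binVal]
    rw [binVal_concat, ih, List.reverse_concat, valLE_cons, add_comm]

lemma forall_mem_map_toNat_lt_two (l : List Bool) : ∀ d ∈ l.map Bool.toNat, d < 2 := by
  rw [List.forall_mem_map]
  exact fun b _ => b.toNat_lt

lemma valLE_lt_two_pow_length (l : List Bool) : valLE l < 2 ^ l.length := by
  simpa [valLE] using
    Nat.ofDigits_lt_base_pow_length one_lt_two (forall_mem_map_toNat_lt_two l)

lemma eq_of_length_eq_of_valLE_eq {l l' : List Bool} (hlen : l.length = l'.length)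
    (hval : valLE l = valLE l') : l = l' :=
  List.map_injective_iff.mpr (by decide : Function.Injective Bool.toNat) <|
    Nat.ofDigits_inj_of_len_eq one_lt_two (by simpa using hlen)
      (forall_mem_map_toNat_lt_two l) (forall_mem_map_toNat_lt_two l') hval

lemma valLE_map_not_add_valLE_add_one (l : List Bool) :
    valLE (l.map not) + valLE l + 1 = 2 ^ l.length := by
  induction l with
  | nil => rfl
  | cons b l ih =>
    rw [List.map_cons, valLE_cons, valLE_cons, List.length_cons, pow_succ, ← ih]
    cases b <;>
      simp only [Bool.not_false, Bool.not_true, Bool.toNat_false, Bool.toNat_true] <;>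
      ring

lemma bitIndices_sum_range_two_pow {r : ℕ → ℕ} {k : ℕ} (hr : StrictAntiOn r (Set.Iio k)) :
    (∑ i ∈ Finset.range k, 2 ^ r i).bitIndices = ((List.range k).map r).reverse := by
  have sorted : ((List.range k).map r).reverse.SortedLT := by
    rw [List.sortedLT_reverse, List.sortedGT_iff_pairwise, List.pairwise_map]
    exact List.pairwise_lt_range.imp_of_mem fun hi hj hij =>
      hr (List.mem_range.mp hi) (List.mem_range.mp hj) hij
  convert Nat.bitIndices_sum_map_two_pow sorted using 2
  rw [List.map_reverse, List.sum_reverse, List.map_map]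
  rfl

lemma lt_length_of_valLE_eq_sum_two_pow {l : List Bool} {r : ℕ → ℕ} {k i : ℕ} (hi : i < k)
    (hl : valLE l = ∑ j ∈ Finset.range k, 2 ^ r j) : r i < l.length := by
  refine (Nat.pow_lt_pow_iff_right one_lt_two).mp ?_
  calc
    2 ^ r i ≤ ∑ j ∈ Finset.range k, 2 ^ r j :=
      Finset.single_le_sum_of_canonicallyOrdered (f := fun j => 2 ^ r j) (Finset.mem_range.mpr hi)
    _ = valLE l := hl.symm
    _ < 2 ^ l.length := valLE_lt_two_pow_length l

end BinaryValue

section PrefixParity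

/-- The word whose bit in position `p` is the parity of the number of ones of `l` in positions
below `p`. It is one bit longer than `l`; read with the least significant bit first, it is the
Calkin–Wilf word of the S-tree vertex `l`. -/
def prefixParity (l : List Bool) : List Bool := l.scanl xor false

lemma length_prefixParity (l : List Bool) : (prefixParity l).length = l.length + 1 :=
  List.length_scanl

lemma scanl_xor_not (p : Bool) (l : List Bool) :
    l.scanl xor (!p) = (l.scanl xor p).map not := by
  induction l generalizing p with
  | nil => rfl
  | cons b l ih => simp [List.scanl_cons, ih]

lemma prefixParity_cons_false (l : List Bool) :
    prefixParity (false :: l) = false :: prefixParity l := by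
  simp [prefixParity, List.scanl_cons]

lemma prefixParity_cons_true (l : List Bool) :
    prefixParity (true :: l) = false :: (prefixParity l).map not := by
  simp [prefixParity, List.scanl_cons, ← scanl_xor_not]

lemma valLE_prefixParity (l : List Bool) :
    (valLE (prefixParity l) : ℤ) =
      (if Even (valLE l).bitIndices.length then 0 else 2 ^ (l.length + 1)) -
        ((valLE l).bitIndices.map fun i => (2 : ℤ) ^ (i + 1)).alternatingSum := by
  induction l with
  | nil => simp [prefixParity, valLE]
  | cons b l ih =>
    have shift : ((valLE l).bitIndices.map fun i => (2 : ℤ) ^ (i + 1 + 1)).alternatingSum =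
        2 * ((valLE l).bitIndices.map fun i => (2 : ℤ) ^ (i + 1)).alternatingSum := by
      simp only [pow_succ' _ (_ + 1), alternatingSum_map_mul_left]
    cases b with
    | false =>
      simp only [prefixParity_cons_false, valLE_cons, Bool.toNat_false, zero_add, Nat.cast_mul,
        Nat.cast_ofNat, ih, Nat.bitIndices_two_mul, List.length_cons, List.length_map, List.map_map,
        Function.comp_def, shift]
      split_ifs <;> ring
    | true =>
      have compl : (valLE ((prefixParity l).map not) : ℤ) =
          2 ^ (l.length + 1) - 1 - valLE (prefixParity l) := by
        have := valLE_map_not_add_valLE_add_one (prefixParity l)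
        rw [length_prefixParity] at this
        zify at this
        linarith
      simp only [prefixParity_cons_true, valLE_cons, Bool.toNat_true, Bool.toNat_false, zero_add,
        Nat.cast_mul, Nat.cast_ofNat, compl, ih, add_comm 1, Nat.bitIndices_two_mul_add_one,
        List.length_cons, List.length_map, Nat.even_add_one, List.map_cons, List.map_map,
        Function.comp_def, List.alternatingSum_cons, shift]
      split_ifs <;> ring

variable {l : List Bool} {r : ℕ → ℕ} {k m : ℕ}

lemma valLE_prefixParity_of_strictAntiOn (hr : StrictAntiOn r (Set.Iio k))
    (hl : valLE l = ∑ i ∈ Finset.range k, 2 ^ r i) :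
    (valLE (prefixParity l) : ℤ) = (if Even k then 0 else 2 ^ (l.length + 1)) -
      ((List.range k).map fun i => (2 : ℤ) ^ (r i + 1)).reverse.alternatingSum := by
  rw [valLE_prefixParity, hl, bitIndices_sum_range_two_pow hr, List.length_reverse, List.length_map,
    List.length_range, List.map_reverse, List.map_map, Function.comp_def]

lemma valLE_prefixParity_of_even (hr : StrictAntiOn r (Set.Iio (2 * m)))
    (hl : valLE l = ∑ i ∈ Finset.range (2 * m), 2 ^ r i) :
    valLE (prefixParity l) =
      ∑ j ∈ Finset.range m, (2 ^ (r (2 * j) + 1) - 2 ^ (r (2 * j + 1) + 1)) := by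
  have antitone_pair : ∀ j ∈ Finset.range m, r (2 * j + 1) + 1 ≤ r (2 * j) + 1 := by
    intro j hj
    rw [Finset.mem_range] at hj
    have := hr (a := 2 * j) (b := 2 * j + 1) (Set.mem_Iio.mpr (by lia)) (Set.mem_Iio.mpr (by lia))
    lia
  apply Nat.cast_injective (R := ℤ)
  rw [valLE_prefixParity_of_strictAntiOn hr hl, if_pos (even_two_mul m), zero_sub,
    alternatingSum_reverse_map_range_two_mul, cast_sum_two_pow_tsub antitone_pair]

lemma valLE_prefixParity_of_odd (hr : StrictAntiOn r (Set.Iio (2 * m + 1)))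
    (hl : valLE l = ∑ i ∈ Finset.range (2 * m + 1), 2 ^ r i) :
    valLE (prefixParity l) = 2 ^ (l.length + 1) - 2 ^ (r 0 + 1) +
      ∑ j ∈ Finset.range m, (2 ^ (r (2 * j + 1) + 1) - 2 ^ (r (2 * j + 2) + 1)) := by
  have antitone_pair : ∀ j ∈ Finset.range m, r (2 * j + 2) + 1 ≤ r (2 * j + 1) + 1 := by
    intro j hj
    rw [Finset.mem_range] at hj
    have := hr (a := 2 * j + 1) (b := 2 * j + 2) (Set.mem_Iio.mpr (by lia))
      (Set.mem_Iio.mpr (by lia))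
    lia
  have top_le : 2 ^ (r 0 + 1) ≤ 2 ^ (l.length + 1) :=
    Nat.pow_le_pow_right two_pos
      (Nat.succ_le_succ (lt_length_of_valLE_eq_sum_two_pow (Nat.succ_pos _) hl).le)
  apply Nat.cast_injective (R := ℤ)
  rw [valLE_prefixParity_of_strictAntiOn hr hl, if_neg (Nat.not_even_two_mul_add_one m),
    alternatingSum_reverse_map_range_two_mul_add_one, Nat.cast_add, Nat.cast_sub top_le,
    cast_sum_two_pow_tsub antitone_pair]
  push_cast
  ring

end PrefixParity

section Trees

lemma Ca_pos (l : List Bool) : 0 < Ca l := by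
  induction l with
  | nil => simp [Ca]
  | cons b l ih => cases b <;> simp only [Ca] <;> positivity

lemma Ca_map_not (l : List Bool) : Ca (l.map not) = (Ca l)⁻¹ := by
  induction l with
  | nil => simp [Ca]
  | cons b l ih =>
    have := Ca_pos l
    cases b <;>
      simp only [List.map_cons, Bool.not_false, Bool.not_true, Ca, ih, if_true, Bool.false_eq_true,
        if_false] <;>
      field_simp <;> ring

lemma Sa_eq_Ca_prefixParity (l : List Bool) : Sa l = Ca (prefixParity l) := by
  induction l with
  | nil => norm_num [Sa, Ca, prefixParity]
  | cons b l ih =>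
    cases b with
    | false => simp [Sa, Ca, prefixParity_cons_false, ih]
    | true =>
      have := Ca_pos (prefixParity l)
      simp only [Sa, prefixParity_cons_true, Ca, Ca_map_not, ih, if_true, Bool.false_eq_true,
        if_false]
      field_simp
      ring

end Trees

/-- Theorem 3.2: let `M ≥ 1`, `1 ≤ Ns ≤ 2^{M−1}`, and write the binary expansion
`Ns − 1 = Σ_{i=1}^{k} 2^{r_i}` with `r_1 > r_2 > ⋯ > r_k ≥ 0` (here 0-indexed, so
`r 0 = r_1`). With `Nc = 1 + Σ_{j=1}^{k/2} (2^{r_{2j−1}+1} − 2^{r_{2j}+1})` for even `k`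
and `Nc = 1 + 2^M − 2^{r_1+1} + Σ_{j=1}^{(k−1)/2} (2^{r_{2j}+1} − 2^{r_{2j+1}+1})` for
odd `k`, the `Ns`-th vertex in level `M` of the S-tree (0-1 sequence `x` of length
`M − 1` with binary value `Ns − 1`) equals the `Nc`-th vertex in level `M` of the
Calkin–Wilf tree (0-1 sequence `y` of length `M` with binary value `Nc − 1`). -/
theorem stree_to_calkinWilf (M Ns k : ℕ) (r : ℕ → ℕ)
    (hM : 1 ≤ M) (hNs₁ : 1 ≤ Ns) (hNs₂ : Ns ≤ 2 ^ (M - 1))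
    (hanti : ∀ i j, i < j → j < k → r j < r i)
    (hexp : Ns - 1 = ∑ i ∈ Finset.range k, 2 ^ r i)
    (x y : List Bool)
    (hx₁ : x.length = M - 1) (hx₂ : binVal x = Ns - 1)
    (hy₁ : y.length = M)
    (hy₂ : binVal y =
      (if k % 2 = 0 then
          1 + ∑ j ∈ Finset.range (k / 2), (2 ^ (r (2 * j) + 1) - 2 ^ (r (2 * j + 1) + 1))
        else
          1 + 2 ^ M - 2 ^ (r 0 + 1) +
            ∑ j ∈ Finset.range ((k - 1) / 2),
              (2 ^ (r (2 * j + 1) + 1) - 2 ^ (r (2 * j + 2) + 1))) - 1) :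
    S x = C y := by
  have hlen : x.reverse.length + 1 = M := by rw [List.length_reverse, hx₁, Nat.sub_add_cancel hM]
  have hr : StrictAntiOn r (Set.Iio k) := fun i _ j hj hij => hanti i j hij hj
  have hval : valLE x.reverse = ∑ i ∈ Finset.range k, 2 ^ r i := by
    rw [← binVal_eq_valLE_reverse, hx₂, hexp]
  suffices hy : y.reverse = prefixParity x.reverse by rw [S, C, hy, Sa_eq_Ca_prefixParity]
  apply eq_of_length_eq_of_valLE_eq
  · rw [length_prefixParity, hlen, List.length_reverse, hy₁]
  rw [← binVal_eq_valLE_reverse, hy₂]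
  obtain ⟨m, rfl | rfl⟩ := Nat.even_or_odd' k
  · rw [valLE_prefixParity_of_even hr hval, if_pos (by lia), Nat.add_sub_cancel_left,
      Nat.mul_div_cancel_left m two_pos]
  · have htop : 2 ^ (r 0 + 1) ≤ 2 ^ M :=
      Nat.pow_le_pow_right two_pos
        (hlen ▸ Nat.succ_le_succ (lt_length_of_valLE_eq_sum_two_pow (Nat.succ_pos _) hval).le)
    rw [valLE_prefixParity_of_odd hr hval, hlen, if_neg (by lia), Nat.add_sub_assoc htop, add_assoc,
      Nat.add_sub_cancel_left, Nat.add_sub_cancel, Nat.mul_div_cancel_left m two_pos]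
end

section
/- For every bit string s, C (s.map not) = (C s)⁻¹: interchanging the symbols 0 and 1 in the 0-1 sequence of a vertex of the Calkin–Wilf tree replaces that vertex by its reciprocal (the symmetry of the Calkin–Wilf tree used in the proof of Theorem 3.2). -/
/-! Inversion fixes the root `1` and conjugates the two child maps `x ↦ x / (1 + x)` and
`x ↦ 1 + x` into each other away from `0`, so it reflects the whole tree. -/

section ChildMaps

variable {K : Type*} [DivisionRing K] {x : K}

theorem inv_div_one_add (hx : x ≠ 0) : (x / (1 + x))⁻¹ = 1 + x⁻¹ := by
  rw [inv_div, add_div, div_self hx, one_div, add_comm]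

theorem inv_div_one_add_inv (hx : x ≠ 0) : x⁻¹ / (1 + x⁻¹) = (1 + x)⁻¹ := by
  rw [← inv_inj, inv_div_one_add (inv_ne_zero hx), inv_inv, inv_inv]

end ChildMaps

theorem C_nil : C [] = 1 := rfl

theorem C_append_false (s : List Bool) : C (s ++ [false]) = C s / (1 + C s) := by
  simp [C, Ca]

theorem C_append_true (s : List Bool) : C (s ++ [true]) = 1 + C s := by
  simp [C, Ca]

theorem C_pos (s : List Bool) : 0 < C s := by
  induction s using List.reverseRecOn with
  | nil => exact C_nil ▸ one_pos
  | append_singleton s b ih =>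
    cases b with
    | false => rw [C_append_false]; positivity
    | true => rw [C_append_true]; positivity

/-- Symmetry of the Calkin–Wilf tree: interchanging the symbols `0` and `1` in the
0-1 sequence of a vertex replaces that vertex by its reciprocal. -/
theorem calkinWilf_symmetry (s : List Bool) :
    C (s.map not) = (C s)⁻¹ := by
  induction s using List.reverseRecOn with
  | nil => rw [List.map_nil, C_nil, inv_one]
  | append_singleton s b ih =>
    have hs : C s ≠ 0 := (C_pos s).ne'
    rw [List.map_append, List.map_singleton]
    cases b with
    | false =>
      calc C (s.map not ++ [true]) = 1 + (C s)⁻¹ := by rw [C_append_true, ih]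
        _ = (C s / (1 + C s))⁻¹ := (inv_div_one_add hs).symm
        _ = (C (s ++ [false]))⁻¹ := by rw [C_append_false]
    | true =>
      calc C (s.map not ++ [false]) = (C s)⁻¹ / (1 + (C s)⁻¹) := by rw [C_append_false, ih]
        _ = (1 + C s)⁻¹ := inv_div_one_add_inv hs
        _ = (C (s ++ [true]))⁻¹ := by rw [C_append_true]
end
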